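/- Consider an MLST instance with source s ∈ T_ℓ and the associated flow-based ILP. The minimum of the objective Σ_{uv∈E} c(uv)·(y_{uv} + y_{vu}) over all feasible ILP solutions equals OPT, the minimum cost of a feasible MLST solution of the instance. -/

import Mathlib

/-- The vertices covered by a set of edges. -/
def edgeSupport {V : Type*} (S : Set (Sym2 V)) : Set V :=
  {v | ∃ e ∈ S, v ∈ e}

/-- The edges of `S` form a connected subgraph containing all vertices of `T`:
all vertices of `T` together with all endpoints of edges of `S` are mutually
reachable using only edges of `S`. -/
def SpansConn {V : Type*} (S : Set (Sym2 V)) (T : Set V) : Prop :=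
  ∀ u ∈ T ∪ edgeSupport S, ∀ v ∈ T ∪ edgeSupport S,
    (SimpleGraph.fromEdgeSet S).Reachable u v

/-- `L(v)`: the largest level `i ∈ {1, …, ℓ}` with `v ∈ T i` (`0` if none). -/
def Lvl {V : Type*} [DecidableEq V] (ℓ : ℕ) (T : ℕ → Finset V) (v : V) : ℕ :=
  ((Finset.Icc 1 ℓ).filter (fun i => v ∈ T i)).sup id

/-- Feasibility of a solution `(x, y, f)` of the flow-based ILP for the MLST problem:
variables live on arcs (ordered adjacent pairs) of `G`; flow conservation routes
`|T₁| − 1` units from the source `s` to the bottom-level terminals; capacity,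
in-degree, linking, propagation and terminal-level constraints as in the paper. -/
def ILPFeasible {V : Type*} [Fintype V] [DecidableEq V] (G : SimpleGraph V)
    (ℓ : ℕ) (T : ℕ → Finset V) (s : V)
    (x y : V → V → ℕ) (f : V → V → ℝ) : Prop :=
  (∀ u v : V, ¬ G.Adj u v → x u v = 0) ∧
  (∀ u v : V, ¬ G.Adj u v → y u v = 0) ∧
  (∀ u v : V, ¬ G.Adj u v → f u v = 0) ∧
  (∀ u v : V, x u v ≤ 1) ∧
  (∀ u v : V, x u v ≤ y u v ∧ y u v ≤ ℓ * x u v) ∧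
  (∀ u v : V, 0 ≤ f u v ∧ f u v ≤ (((T 1).card : ℝ) - 1) * (x u v : ℝ)) ∧
  (∀ v : V, (∑ w : V, f v w) - (∑ u : V, f u v) =
      if v = s then ((T 1).card : ℝ) - 1 else if v ∈ T 1 then -1 else 0) ∧
  (∀ v : V, ∑ u : V, x u v ≤ 1) ∧
  (∀ v w : V, G.Adj v w → v ≠ s → x v w ≤ ∑ u ∈ Finset.univ.erase w, x u v) ∧
  (∀ v w : V, G.Adj v w → v ≠ s → y v w ≤ ∑ u ∈ Finset.univ.erase w, y u v) ∧
  (∀ v ∈ T 1, v ≠ s → Lvl ℓ T v ≤ ∑ u : V, y u v)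

/-- The ILP objective `Σ_{uv ∈ E} c(uv)·(y_{uv} + y_{vu})`, written as a sum over
ordered pairs (the cost function `c` is symmetric and `y` vanishes off arcs). -/
def ILPobj {V : Type*} [Fintype V] (c : V → V → ℝ) (y : V → V → ℕ) : ℝ :=
  ∑ u : V, ∑ v : V, c u v * (y u v : ℝ)

/-- The undirected edge set on level `i` extracted from the ILP variables `y`:
edges `uv` of `G` with `y u v ≥ i` or `y v u ≥ i`. -/
def EdgeLvl {V : Type*} (G : SimpleGraph V) (y : V → V → ℕ) (i : ℕ) : Set (Sym2 V) :=
  {e | e ∈ G.edgeSet ∧ ∃ u v : V, e = s(u, v) ∧ i ≤ y u v}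

/-- A feasible MLST solution: nested edge sets `Esol ℓ ⊆ … ⊆ Esol 1 ⊆ E` with
`Esol i` spanning `T i` for each level `1 ≤ i ≤ ℓ`. -/
def MLSTFeasible {V : Type*} (G : SimpleGraph V) (ℓ : ℕ) (T : ℕ → Set V)
    (Esol : ℕ → Finset (Sym2 V)) : Prop :=
  (∀ i ∈ Finset.Icc 1 ℓ, ↑(Esol i) ⊆ G.edgeSet ∧ SpansConn (↑(Esol i)) (T i)) ∧
  (∀ i ∈ Finset.Icc 1 ℓ, ∀ j ∈ Finset.Icc 1 ℓ, i ≤ j → Esol j ⊆ Esol i)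

/-- The set of costs of feasible MLST solutions. Its least element is `OPT`. -/
def MLSTCosts {V : Type*} (G : SimpleGraph V) (c : Sym2 V → ℝ) (ℓ : ℕ)
    (T : ℕ → Set V) : Set ℝ :=
  {v | ∃ Esol : ℕ → Finset (Sym2 V), MLSTFeasible G ℓ T Esol ∧
    v = ∑ i ∈ Finset.Icc 1 ℓ, ∑ e ∈ Esol i, c e}

/-!
An ILP solution may carry positive levels on a directed cycle detached from `s`, so only arcs
reachable from the source are used. Flow conservation makes every terminal reachable from `s` along
arcs of positive level. As the in-degrees are at most one, `y`-propagation says that levels do not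
increase along such a path, so a terminal of level `i` is even reached through arcs of level at
least `i`; these arcs form the `i`-th edge set of an MLST solution.

Conversely, let `lv v` be the highest level whose edges connect `s` to `v`, and let the parent of
`v` be the last vertex before `v` on a shortest path from `s` on that level. The parent has a
larger `lv`, or the same `lv` and a smaller distance, so the parent arcs form a tree. Labelling each
of them with the `lv` of its head, and sending one unit of flow to every terminal, solves the ILP.
-/

open Finset Relation

/-! ### Order and graph preliminaries -/

lemma isLeast_of_isCoinitialFor {α : Type*} [PartialOrder α] {A B : Set α} {m : α}
    (hAB : IsCoinitialFor A B) (hBA : IsCoinitialFor B A) (hm : IsLeast A m) : IsLeast B m := by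
  have hlower : m ∈ lowerBounds B := lowerBounds_mono_of_isCoinitialFor hBA hm.2
  obtain ⟨b, hb, hbm⟩ := hAB hm.1
  exact ⟨hbm.antisymm (hlower hb) ▸ hb, hlower⟩

lemma exists_adj_reachable_dist_lt {V : Type*} {H : SimpleGraph V} {s v : V}
    (h : H.Reachable s v) (hne : v ≠ s) :
    ∃ u, H.Adj u v ∧ H.Reachable s u ∧ H.dist s u < H.dist s v := by
  obtain ⟨q, hq⟩ := h.exists_walk_length_eq_dist
  have hnil : ¬ q.Nil := fun hn => hne hn.eq.symm
  refine ⟨q.penultimate, q.adj_penultimate hnil, q.dropLast.reachable, ?_⟩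
  rw [← hq, ← q.length_dropLast_add_one hnil]
  exact Nat.lt_succ_of_le (SimpleGraph.dist_le _)

/-! ### Net outflow -/

section NetOutflow

variable {V : Type*} [Fintype V]

/-- The net amount `∑ f v w - ∑ f u v` that the arc function `f` sends out of a vertex `v`, bundled
as an additive map in `f` so that flows can be superposed. -/
def netOutflow : (V → V → ℝ) →+ V → ℝ where
  toFun f v := ∑ w, f v w - ∑ u, f u v
  map_zero' := by ext; simp
  map_add' f g := by
    ext
    simp only [Pi.add_apply, sum_add_distrib]
    ring

lemma netOutflow_apply (f : V → V → ℝ) (v : V) :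
    netOutflow f v = ∑ w, f v w - ∑ u, f u v := rfl

lemma netOutflow_single [DecidableEq V] (u v : V) :
    netOutflow (Pi.single u (Pi.single v 1)) = Pi.single u 1 - Pi.single v 1 := by
  ext w
  have hout : ∑ z, (Pi.single u (Pi.single v 1) : V → V → ℝ) w z = (Pi.single u 1 : V → ℝ) w := by
    by_cases hw : w = u
    · subst hw; simp
    · simp [hw]
  have hin : ∑ z, (Pi.single u (Pi.single v 1) : V → V → ℝ) z w = (Pi.single v 1 : V → ℝ) w := by
    rw [← Finset.sum_apply, Fintype.sum_pi_single']
  rw [netOutflow_apply, hout, hin, Pi.sub_apply]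

lemma sum_netOutflow_nonneg_of_no_inflow {f : V → V → ℝ} (hf : ∀ u v, 0 ≤ f u v) {N : Finset V}
    (hN : ∀ u ∉ N, ∀ v ∈ N, f u v = 0) : 0 ≤ ∑ v ∈ N, netOutflow f v := by
  have hin : ∑ v ∈ N, ∑ u, f u v = ∑ v ∈ N, ∑ u ∈ N, f u v :=
    sum_congr rfl fun v hv => (sum_subset (subset_univ N) fun u _ hu => hN u hu v hv).symm
  have hout : ∑ v ∈ N, ∑ w ∈ N, f v w ≤ ∑ v ∈ N, ∑ w, f v w :=
    sum_le_sum fun v _ => sum_le_sum_of_subset_of_nonneg (subset_univ N) fun w _ _ => hf v w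
  simp only [netOutflow_apply, sum_sub_distrib]
  rw [hin, sum_comm (s := N) (t := N)]
  exact sub_nonneg.2 hout

lemma reflTransGen_of_netOutflow_neg {f : V → V → ℝ} (hf : ∀ u v, 0 ≤ f u v) {s t : V}
    (hs : ∀ v ≠ s, netOutflow f v ≤ 0) (ht : netOutflow f t < 0) :
    ReflTransGen (fun u v => 0 < f u v) s t := by
  classical
  by_contra hst
  let N : Finset V := {v | ¬ ReflTransGen (fun u v => 0 < f u v) s v}
  have hN (v : V) : v ∈ N ↔ ¬ ReflTransGen (fun u v => 0 < f u v) s v := mem_filter_univ v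
  have hsN : s ∉ N := fun h => (hN s).1 h .refl
  have hno_inflow : ∀ u ∉ N, ∀ v ∈ N, f u v = 0 := fun u hu v hv =>
    le_antisymm (not_lt.1 fun huv => (hN v).1 hv ((not_not.1 (mt (hN u).2 hu)).tail huv)) (hf u v)
  have hneg : ∑ v ∈ N, netOutflow f v < 0 :=
    sum_neg' (fun v hv => hs v (ne_of_mem_of_not_mem hv hsN)) ⟨t, (hN t).2 hst, ht⟩
  exact hneg.not_ge (sum_netOutflow_nonneg_of_no_inflow hf hno_inflow)

end NetOutflow

/-! ### The objective, level by level -/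

section Objective

variable {V : Type*} [Fintype V]

lemma ILPobj_eq_sum_levels (c : V → V → ℝ) {y : V → V → ℕ} {ℓ : ℕ} (hy : ∀ u v, y u v ≤ ℓ) :
    ILPobj c y = ∑ i ∈ Icc 1 ℓ, ∑ a : V × V with i ≤ y a.1 a.2, c a.1 a.2 := by
  simp_rw [sum_filter]
  rw [sum_comm, ILPobj, ← Fintype.sum_prod_type' (f := fun u v => c u v * (y u v : ℝ))]
  refine sum_congr rfl fun a _ => ?_
  have hlevels : {i ∈ Icc 1 ℓ | i ≤ y a.1 a.2} = Icc 1 (y a.1 a.2) := by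
    ext i
    have := hy a.1 a.2
    simp only [mem_filter, mem_Icc]
    lia
  rw [← sum_filter, hlevels, sum_const, Nat.card_Icc, Nat.add_sub_cancel, nsmul_eq_mul, mul_comm]

lemma ILPobj_le_of_asymm {w : Sym2 V → ℝ} {y : V → V → ℕ} {ℓ : ℕ}
    {E : ℕ → Finset (Sym2 V)} (hw : ∀ i ∈ Icc 1 ℓ, ∀ e ∈ E i, 0 ≤ w e) (hy : ∀ u v, y u v ≤ ℓ)
    (hasymm : ∀ u v, 0 < y u v → y v u = 0)
    (hE : ∀ i ∈ Icc 1 ℓ, ∀ u v, i ≤ y u v → s(u, v) ∈ E i) :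
    ILPobj (fun u v => w s(u, v)) y ≤ ∑ i ∈ Icc 1 ℓ, ∑ e ∈ E i, w e := by
  classical
  rw [ILPobj_eq_sum_levels _ hy]
  refine sum_le_sum fun i hi => ?_
  have hinj : Set.InjOn (fun a : V × V => s(a.1, a.2)) ({a | i ≤ y a.1 a.2} : Finset (V × V)) := by
    rintro ⟨u, v⟩ huv ⟨u', v'⟩ huv' heq
    rw [mem_coe, mem_filter_univ] at huv huv'
    rcases Sym2.eq_iff.1 heq with ⟨rfl, rfl⟩ | ⟨rfl, rfl⟩
    · rfl
    · have := hasymm u v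
      have := (mem_Icc.1 hi).1
      lia
  rw [← sum_image hinj (f := w)]
  refine sum_le_sum_of_subset_of_nonneg (fun e he => ?_) fun e he _ => hw i hi e he
  obtain ⟨⟨u, v⟩, huv, rfl⟩ := mem_image.1 he
  exact hE i hi u v (mem_filter.1 huv).2

end Objective

/-! ### From the ILP to edge sets -/

section ReachedEdges

variable {V : Type*} [Fintype V] [DecidableEq V] {r r' : V → V → Prop} {s v : V}

open scoped Classical in
/-- The undirected edges underlying the arcs of the relation `r` that can be traversed when starting
from `s`. With `r u v := i ≤ y u v` this is the `i`-th edge set extracted from an ILP solution. -/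
noncomputable def reachedEdges (r : V → V → Prop) (s : V) : Finset (Sym2 V) :=
  ({a | ReflTransGen r s a.1 ∧ r a.1 a.2} : Finset (V × V)).image fun a => s(a.1, a.2)

lemma mem_reachedEdges {e : Sym2 V} :
    e ∈ reachedEdges r s ↔ ∃ u v, ReflTransGen r s u ∧ r u v ∧ s(u, v) = e := by
  simp [reachedEdges, and_assoc]

lemma reachedEdges_mono (h : ∀ u v, r u v → r' u v) : reachedEdges r s ⊆ reachedEdges r' s := by
  intro e he
  obtain ⟨u, v, hu, huv, rfl⟩ := mem_reachedEdges.1 he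
  exact mem_reachedEdges.2 ⟨u, v, ReflTransGen.mono h _ _ hu, h u v huv, rfl⟩

lemma reachable_reachedEdges (hv : ReflTransGen r s v) :
    (SimpleGraph.fromEdgeSet (reachedEdges r s : Set (Sym2 V))).Reachable s v := by
  induction hv with
  | refl => rfl
  | @tail u v hu huv ih =>
    by_cases hne : u = v
    · exact hne ▸ ih
    · have hadj := (SimpleGraph.fromEdgeSet_adj _).2
        ⟨mem_coe.2 (mem_reachedEdges.2 ⟨u, v, hu, huv, rfl⟩), hne⟩
      exact ih.trans hadj.reachable

lemma spansConn_reachedEdges {T : Set V} (hT : ∀ v ∈ T, ReflTransGen r s v) :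
    SpansConn (reachedEdges r s : Set (Sym2 V)) T := by
  suffices hreach : ∀ v ∈ T ∪ edgeSupport (reachedEdges r s : Set (Sym2 V)), ReflTransGen r s v from
    fun u hu v hv =>
      (reachable_reachedEdges (hreach u hu)).symm.trans (reachable_reachedEdges (hreach v hv))
  rintro v (hv | ⟨e, he, hve⟩)
  · exact hT v hv
  · obtain ⟨a, b, ha, hab, rfl⟩ := mem_reachedEdges.1 he
    rcases Sym2.mem_iff.1 hve with rfl | rfl
    · exact ha
    · exact ha.tail hab

lemma sum_reachedEdges_le [DecidableRel r] {w : Sym2 V → ℝ} (hw : ∀ u v, r u v → 0 ≤ w s(u, v)) :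
    ∑ e ∈ reachedEdges r s, w e ≤ ∑ a : V × V with r a.1 a.2, w s(a.1, a.2) := by
  unfold reachedEdges
  refine (sum_image_le_of_nonneg fun e he => ?_).trans
    (sum_le_sum_of_subset_of_nonneg (fun a ha => ?_) fun a ha _ => ?_)
  · obtain ⟨u, v, -, huv, rfl⟩ := mem_reachedEdges.1 he
    exact hw u v huv
  · simp only [mem_filter_univ] at ha ⊢
    exact ha.2
  · exact hw a.1 a.2 (mem_filter.1 ha).2

end ReachedEdges

lemma le_Lvl {V : Type*} [DecidableEq V] {ℓ i : ℕ} {T : ℕ → Finset V} {v : V} (hi : i ∈ Icc 1 ℓ)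
    (hv : v ∈ T i) : i ≤ Lvl ℓ T v :=
  le_sup (f := id) (mem_filter.2 ⟨hi, hv⟩)

namespace ILPFeasible

variable {V : Type*} [Fintype V] [DecidableEq V] {G : SimpleGraph V} {ℓ i : ℕ}
  {T : ℕ → Finset V} {s u v : V} {x y : V → V → ℕ} {f : V → V → ℝ}

lemma adj_of_pos (h : ILPFeasible G ℓ T s x y f) (huv : 0 < y u v) : G.Adj u v := by
  obtain ⟨-, hy, -⟩ := h
  by_contra hadj
  exact huv.ne' (hy u v hadj)

lemma le_level (h : ILPFeasible G ℓ T s x y f) (u v : V) : y u v ≤ ℓ := by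
  obtain ⟨-, -, -, hx, hlink, -⟩ := h
  exact (hlink u v).2.trans (mul_le_of_le_one_right (Nat.zero_le ℓ) (hx u v))

lemma sum_eq_of_pos (h : ILPFeasible G ℓ T s x y f) (huv : 0 < y u v) : ∑ u', y u' v = y u v := by
  obtain ⟨-, -, -, -, hlink, -, -, hindeg, -⟩ := h
  have hxuv : 0 < x u v := Nat.pos_of_mul_pos_left (huv.trans_le (hlink u v).2)
  refine sum_eq_single_of_mem u (mem_univ u) fun u' _ hne => ?_
  have hpair : x u' v + x u v ≤ ∑ z, x z v :=
    add_le_sum (f := fun z => x z v) (fun _ _ => Nat.zero_le _) (mem_univ u') (mem_univ u) hne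
  have hx : x u' v = 0 := by
    have := hindeg v
    lia
  simpa [hx] using (hlink u' v).2

lemma le_of_pos (h : ILPFeasible G ℓ T s x y f) (hv : v ≠ s) (huv : 0 < y u v) (v' : V) :
    y v v' ≤ y u v := by
  by_cases hadj : G.Adj v v'
  · have hsum := h.sum_eq_of_pos huv
    obtain ⟨-, -, -, -, -, -, -, -, -, hprop, -⟩ := h
    exact (hprop v v' hadj hv).trans ((sum_le_sum_of_subset (subset_univ _)).trans hsum.le)
  · exact (Nat.eq_zero_of_not_pos (mt h.adj_of_pos hadj)).trans_le (Nat.zero_le _)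

lemma reflTransGen_pos (h : ILPFeasible G ℓ T s x y f) (hv : v ∈ T 1) :
    ReflTransGen (fun u v => 0 < y u v) s v := by
  obtain ⟨-, -, -, -, hlink, hcap, hflow, -⟩ := h
  by_cases hvs : v = s
  · exact hvs ▸ .refl
  have hsink : ∀ z ≠ s, netOutflow f z ≤ 0 := by
    intro z hz
    rw [netOutflow_apply, hflow z, if_neg hz]
    split_ifs <;> norm_num
  have hterminal : netOutflow f v < 0 := by
    rw [netOutflow_apply, hflow v, if_neg hvs, if_pos hv]
    norm_num
  have hlevel : ∀ a b, 0 < f a b → 0 < y a b := by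
    refine fun a b hab => (Nat.pos_of_ne_zero fun hx => ?_ : 0 < x a b).trans_le (hlink a b).1
    have hle := (hcap a b).2
    rw [hx, Nat.cast_zero, mul_zero] at hle
    exact hab.not_ge hle
  exact ReflTransGen.mono hlevel _ _
    (reflTransGen_of_netOutflow_neg (fun u v => (hcap u v).1) hsink hterminal)

lemma reflTransGen_le (h : ILPFeasible G ℓ T s x y f)
    (hu : ReflTransGen (fun u v => 0 < y u v) s u) (hi : i ≤ y u v) :
    ReflTransGen (fun u v => i ≤ y u v) s u := by
  induction hu generalizing v with
  | refl => exact .refl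
  | @tail a u _ hau ih =>
    by_cases hus : u = s
    · exact hus ▸ .refl
    · have hi' : i ≤ y a u := hi.trans (h.le_of_pos hus hau v)
      exact (ih hi').tail hi'

lemma reflTransGen_le_of_mem (h : ILPFeasible G ℓ T s x y f) (hi : i ∈ Icc 1 ℓ) (hv : v ∈ T i)
    (hv₁ : v ∈ T 1) : ReflTransGen (fun u v => i ≤ y u v) s v := by
  rcases (h.reflTransGen_pos hv₁).cases_tail with rfl | ⟨u, hu, huv⟩
  · exact .refl
  by_cases hvs : v = s
  · exact hvs ▸ .refl
  have hsum := h.sum_eq_of_pos huv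
  have hle : i ≤ y u v := by
    obtain ⟨-, -, -, -, -, -, -, -, -, -, hlevel⟩ := h
    exact (le_Lvl hi hv).trans (hsum ▸ hlevel v hv₁ hvs)
  exact (h.reflTransGen_le hu hle).tail hle

lemma mlstFeasible_reachedEdges (h : ILPFeasible G ℓ T s x y f) (hT : ∀ i ∈ Icc 1 ℓ, T i ⊆ T 1) :
    MLSTFeasible G ℓ (fun i => ↑(T i)) fun i => reachedEdges (fun u v => i ≤ y u v) s := by
  refine ⟨fun i hi => ⟨fun e he => ?_, spansConn_reachedEdges fun v hv => ?_⟩,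
    fun i _ j _ hij => reachedEdges_mono fun _ _ => hij.trans⟩
  · obtain ⟨u, v, -, huv, rfl⟩ := mem_reachedEdges.1 (mem_coe.1 he)
    exact h.adj_of_pos ((mem_Icc.1 hi).1.trans huv)
  · exact h.reflTransGen_le_of_mem hi hv (hT i hi hv)

lemma sum_reachedEdges_le_ILPobj (h : ILPFeasible G ℓ T s x y f) {w : Sym2 V → ℝ}
    (hw : ∀ e ∈ G.edgeSet, 0 ≤ w e) :
    ∑ i ∈ Icc 1 ℓ, ∑ e ∈ reachedEdges (fun u v => i ≤ y u v) s, w e ≤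
      ILPobj (fun u v => w s(u, v)) y := by
  rw [ILPobj_eq_sum_levels _ h.le_level]
  exact sum_le_sum fun i hi => sum_reachedEdges_le fun u v huv =>
    hw _ (h.adj_of_pos ((mem_Icc.1 hi).1.trans huv))

end ILPFeasible

/-! ### From edge sets to the ILP -/

section ParentArc

variable {V : Type*} [DecidableEq V] {s u v : V} {p : V → V} {a : V → ℕ}

/-- The arc function that puts the label `a v` of every vertex `v ≠ s` on the arc `(p v, v)` from
its parent, and `0` on all other arcs. It encodes trees rooted at `s` as ILP variables. -/
def parentArcLabel (s : V) (p : V → V) (a : V → ℕ) (u v : V) : ℕ :=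
  if u = p v ∧ v ≠ s then a v else 0

lemma parentArcLabel_parent (hv : v ≠ s) : parentArcLabel s p a (p v) v = a v :=
  if_pos ⟨rfl, hv⟩

lemma parentArcLabel_pos_iff : 0 < parentArcLabel s p a u v ↔ u = p v ∧ v ≠ s ∧ 0 < a v := by
  unfold parentArcLabel
  split_ifs with h <;> simp_all

lemma parentArcLabel_le : parentArcLabel s p a u v ≤ a v := by
  unfold parentArcLabel
  split_ifs <;> simp

lemma parentArcLabel_min_one_le :
    parentArcLabel s p (fun v => min 1 (a v)) u v ≤ parentArcLabel s p a u v := by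
  unfold parentArcLabel
  split_ifs <;> simp

lemma parentArcLabel_le_mul_min_one {ℓ : ℕ} (hℓ : a v ≤ ℓ) :
    parentArcLabel s p a u v ≤ ℓ * parentArcLabel s p (fun v => min 1 (a v)) u v := by
  rcases Nat.eq_zero_or_pos (a v) with h0 | hpos
  · exact (parentArcLabel_le.trans_eq h0).trans (Nat.zero_le _)
  · unfold parentArcLabel
    split_ifs
    · simpa [Nat.succ_le_of_lt hpos] using hℓ
    · simp

lemma sum_parentArcLabel [Fintype V] (v : V) :
    ∑ u, parentArcLabel s p a u v = if v = s then 0 else a v := by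
  by_cases hv : v = s <;> simp [parentArcLabel, hv]

lemma parentArcLabel_le_sum_erase [Fintype V] (hmono : ∀ v ≠ s, a v ≤ a (p v))
    (hcycle : ∀ v ≠ s, p v ≠ s → 0 < a v → p (p v) ≠ v) (hu : u ≠ s) :
    parentArcLabel s p a u v ≤ ∑ z ∈ univ.erase v, parentArcLabel s p a z u := by
  rcases Nat.eq_zero_or_pos (parentArcLabel s p a u v) with h0 | hpos
  · exact h0.trans_le (Nat.zero_le _)
  obtain ⟨rfl, hv, hav⟩ := parentArcLabel_pos_iff.1 hpos
  have hmem : p (p v) ∈ univ.erase v := mem_erase.2 ⟨hcycle v hv hu hav, mem_univ _⟩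
  calc parentArcLabel s p a (p v) v
      = a v := parentArcLabel_parent hv
    _ ≤ a (p v) := hmono v hv
    _ = parentArcLabel s p a (p (p v)) (p v) := (parentArcLabel_parent hu).symm
    _ ≤ _ := single_le_sum (f := fun z => parentArcLabel s p a z (p v))
        (fun _ _ => Nat.zero_le _) hmem

end ParentArc

/-- The vertices of positive level form a tree rooted at `s`, with parent map `p`, along which the
levels `lv` do not increase. Acyclicity is encoded by a `rank` that drops from `v` to `p v`. The
values of `p` at `s` and at vertices of level `0` carry no information. -/
structure IsLevelTree {V α : Type*} [Preorder α] (s : V) (p : V → V) (lv : V → ℕ)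
    (rank : V → α) : Prop where
  level_le_parent : ∀ v ≠ s, lv v ≤ lv (p v)
  rank_parent_lt : ∀ v ≠ s, 0 < lv v → rank (p v) < rank v

namespace IsLevelTree

variable {V α : Type*} [Preorder α] {s u v : V} {p : V → V} {lv : V → ℕ} {rank : V → α}

lemma parent_parent_ne (h : IsLevelTree s p lv rank) (hv : v ≠ s) (hpv : p v ≠ s)
    (hlv : 0 < lv v) : p (p v) ≠ v := by
  intro hcycle
  have hlt := h.rank_parent_lt (p v) hpv (hlv.trans_le (h.level_le_parent v hv))
  rw [hcycle] at hlt
  exact hlt.asymm (h.rank_parent_lt v hv hlv)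

variable [DecidableEq V]

lemma parentArcLabel_asymm (h : IsLevelTree s p lv rank) (huv : 0 < parentArcLabel s p lv u v) :
    parentArcLabel s p lv v u = 0 := by
  obtain ⟨rfl, hv, hlv⟩ := parentArcLabel_pos_iff.1 huv
  refine Nat.eq_zero_of_not_pos fun hvu => ?_
  obtain ⟨hcycle, hpv, -⟩ := parentArcLabel_pos_iff.1 hvu
  exact h.parent_parent_ne hv hpv hlv hcycle.symm

variable [Fintype V] [WellFoundedLT α]

/- The clause on ranks makes the induction work: the flow to `p t` does not use the arc `(p t, t)`,
so adding a unit on that arc keeps the flow at most one. -/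
lemma exists_unitFlow (h : IsLevelTree s p lv rank) {t : V} (ht : 0 < lv t) :
    ∃ g : V → V → ℝ, (∀ u v, 0 ≤ g u v) ∧
      (∀ u v, g u v ≤ parentArcLabel s p (fun v => min 1 (lv v)) u v) ∧
      (∀ u v, rank t < rank v → g u v = 0) ∧
      netOutflow g = Pi.single s 1 - Pi.single t 1 := by
  induction t using (InvImage.wf rank wellFounded_lt).induction with
  | _ t ih =>
  by_cases hts : t = s
  · exact ⟨0, by simp, by simp, by simp, by simp [hts]⟩
  have hrank : rank (p t) < rank t := h.rank_parent_lt t hts ht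
  obtain ⟨g, hg_nonneg, hg_le, hg_rank, hg_out⟩ :=
    ih (p t) hrank (ht.trans_le (h.level_le_parent t hts))
  let e : V → V → ℝ := Pi.single (p t) (Pi.single t 1)
  have he (u v : V) : e u v = if u = p t ∧ v = t then 1 else 0 := by
    by_cases hu : u = p t <;> by_cases hv : v = t <;> simp [e, hu, hv]
  refine ⟨g + e, fun u v => ?_, fun u v => ?_, fun u v huv => ?_, ?_⟩
  · refine add_nonneg (hg_nonneg u v) ?_
    rw [he]
    split_ifs <;> norm_num
  · rw [Pi.add_apply, Pi.add_apply, he]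
    split_ifs with harc
    · obtain ⟨rfl, rfl⟩ := harc
      rw [hg_rank _ _ hrank, zero_add, parentArcLabel_parent hts, Nat.min_eq_left ht, Nat.cast_one]
    · rw [add_zero]
      exact hg_le u v
  · have hvt : v ≠ t := fun hvt => huv.ne (hvt ▸ rfl)
    rw [Pi.add_apply, Pi.add_apply, he, if_neg fun harc => hvt harc.2, add_zero]
    exact hg_rank u v (hrank.trans huv)
  · rw [map_add, hg_out, netOutflow_single]
    abel

lemma exists_flow (h : IsLevelTree s p lv rank) {R : Finset V} (hR : ∀ t ∈ R, 0 < lv t) :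
    ∃ f : V → V → ℝ, (∀ u v, 0 ≤ f u v) ∧
      (∀ u v, f u v ≤ #R * parentArcLabel s p (fun v => min 1 (lv v)) u v) ∧
      ∀ v, netOutflow f v = (if v = s then (#R : ℝ) else 0) - if v ∈ R then 1 else 0 := by
  choose! g hg_nonneg hg_le _ hg_out using fun t => h.exists_unitFlow (t := t)
  refine ⟨∑ t ∈ R, g t, fun u v => ?_, fun u v => ?_, fun v => ?_⟩
  · simp only [Finset.sum_apply]
    exact sum_nonneg fun t ht => hg_nonneg t (hR t ht) u v
  · simp only [Finset.sum_apply]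
    rw [← nsmul_eq_mul]
    exact sum_le_card_nsmul _ _ _ fun t ht => hg_le t (hR t ht) u v
  · rw [map_sum, sum_congr rfl fun t ht => hg_out t (hR t ht)]
    simp [Finset.sum_apply, Pi.single_apply, sum_sub_distrib]

lemma exists_ilpFeasible (h : IsLevelTree s p lv rank) {G : SimpleGraph V} {ℓ : ℕ}
    {T : ℕ → Finset V} (hG : ∀ v ≠ s, 0 < lv v → G.Adj (p v) v) (hℓ : ∀ v, lv v ≤ ℓ)
    (hs : s ∈ T 1) (hpos : ∀ v ∈ T 1, 0 < lv v) (hLvl : ∀ v ∈ T 1, Lvl ℓ T v ≤ lv v) :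
    ∃ f, ILPFeasible G ℓ T s (parentArcLabel s p fun v => min 1 (lv v)) (parentArcLabel s p lv)
      f := by
  obtain ⟨f, hf_nonneg, hf_le, hf_out⟩ :=
    h.exists_flow (R := (T 1).erase s) fun t ht => hpos t (mem_of_mem_erase ht)
  rw [cast_card_erase_of_mem hs] at hf_le hf_out
  have hy_adj : ∀ u v, ¬ G.Adj u v → parentArcLabel s p lv u v = 0 := by
    refine fun u v hadj => Nat.eq_zero_of_not_pos fun hy => ?_
    obtain ⟨rfl, hv, hlv⟩ := parentArcLabel_pos_iff.1 hy
    exact hadj (hG v hv hlv)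
  have hx_adj : ∀ u v, ¬ G.Adj u v → parentArcLabel s p (fun v => min 1 (lv v)) u v = 0 :=
    fun u v hadj => Nat.le_zero.1 (parentArcLabel_min_one_le.trans_eq (hy_adj u v hadj))
  have hf_adj : ∀ u v, ¬ G.Adj u v → f u v = 0 := fun u v hadj =>
    le_antisymm (by simpa [hx_adj u v hadj] using hf_le u v) (hf_nonneg u v)
  have hf_conserved : ∀ v, ∑ w, f v w - ∑ u, f u v =
      if v = s then (#(T 1) : ℝ) - 1 else if v ∈ T 1 then -1 else 0 := by
    intro v
    rw [← netOutflow_apply, hf_out]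
    by_cases hvs : v = s <;> by_cases hv : v ∈ T 1 <;> simp [hvs, hv]
  have hx_indegree : ∀ v, ∑ u, parentArcLabel s p (fun v => min 1 (lv v)) u v ≤ 1 := by
    intro v
    rw [sum_parentArcLabel]
    split_ifs <;> simp
  have hy_terminal : ∀ v ∈ T 1, v ≠ s → Lvl ℓ T v ≤ ∑ u, parentArcLabel s p lv u v := by
    intro v hv hvs
    rw [sum_parentArcLabel, if_neg hvs]
    exact hLvl v hv
  exact ⟨f, hx_adj, hy_adj, hf_adj, fun u v => parentArcLabel_le.trans (min_le_left _ _),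
    fun u v => ⟨parentArcLabel_min_one_le, parentArcLabel_le_mul_min_one (hℓ v)⟩,
    fun u v => ⟨hf_nonneg u v, hf_le u v⟩, hf_conserved, hx_indegree,
    fun u v _ hu => parentArcLabel_le_sum_erase
      (fun v hv => min_le_min_left 1 (h.level_le_parent v hv))
      (fun v hv hpv hlv => h.parent_parent_ne hv hpv (lt_min_iff.1 hlv).2) hu,
    fun u v _ hu => parentArcLabel_le_sum_erase h.level_le_parent
      (fun v => h.parent_parent_ne) hu, hy_terminal⟩

end IsLevelTree

section ReachLevel

variable {V : Type*} {H : ℕ → SimpleGraph V} {ℓ i : ℕ} {s v : V}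

open scoped Classical in
/-- The highest level `i ≤ ℓ` such that `v` is connected to `s` in the `i`-th graph `H i`, and `0`
if there is no such level. -/
noncomputable def reachLevel (H : ℕ → SimpleGraph V) (ℓ : ℕ) (s v : V) : ℕ :=
  Nat.findGreatest (fun i => (H i).Reachable s v) ℓ

lemma reachLevel_le : reachLevel H ℓ s v ≤ ℓ := by
  classical exact Nat.findGreatest_le ℓ

lemma le_reachLevel (hi : i ≤ ℓ) (hv : (H i).Reachable s v) : i ≤ reachLevel H ℓ s v := by
  classical exact Nat.le_findGreatest hi hv

lemma reachable_reachLevel (hv : 0 < reachLevel H ℓ s v) :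
    (H (reachLevel H ℓ s v)).Reachable s v := by
  classical exact Nat.findGreatest_of_ne_zero (P := fun i => (H i).Reachable s v) rfl hv.ne'

lemma exists_isLevelTree_reachLevel (H : ℕ → SimpleGraph V) (ℓ : ℕ) (s : V) :
    ∃ (p : V → V) (rank : V → ℕ ×ₗ ℕ), IsLevelTree s p (reachLevel H ℓ s) rank ∧
      ∀ v ≠ s, 0 < reachLevel H ℓ s v → (H (reachLevel H ℓ s v)).Adj (p v) v := by
  let lv := reachLevel H ℓ s
  let rank : V → ℕ ×ₗ ℕ := fun v => toLex (ℓ - lv v, (H (lv v)).dist s v)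
  have hparent : ∀ v, v ≠ s ∧ 0 < lv v →
      ∃ u, (H (lv v)).Adj u v ∧ lv v ≤ lv u ∧ rank u < rank v := by
    rintro v ⟨hvs, hv⟩
    obtain ⟨u, hadj, hu, hdist⟩ := exists_adj_reachable_dist_lt (reachable_reachLevel hv) hvs
    have hle : lv v ≤ lv u := le_reachLevel reachLevel_le hu
    refine ⟨u, hadj, hle, Prod.Lex.toLex_lt_toLex.2 ?_⟩
    rcases hle.lt_or_eq with hlt | heq
    · exact .inl (Nat.sub_lt_sub_left (hlt.trans_le reachLevel_le) hlt)
    · exact .inr ⟨by rw [heq], heq ▸ hdist⟩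
  choose! p hadj hle hrank using hparent
  refine ⟨p, rank, ⟨fun v hvs => ?_, fun v hvs hv => hrank v ⟨hvs, hv⟩⟩,
    fun v hvs hv => hadj v ⟨hvs, hv⟩⟩
  rcases Nat.eq_zero_or_pos (lv v) with h0 | hv
  · exact h0.trans_le (Nat.zero_le _)
  · exact hle v ⟨hvs, hv⟩

end ReachLevel

lemma MLSTFeasible.exists_ilpFeasible {V : Type*} [Fintype V] [DecidableEq V] {G : SimpleGraph V}
    {w : Sym2 V → ℝ} {ℓ : ℕ} {T : ℕ → Finset V} {s : V} {E : ℕ → Finset (Sym2 V)}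
    (h : MLSTFeasible G ℓ (fun i => ↑(T i)) E) (hw : ∀ e ∈ G.edgeSet, 0 ≤ w e) (hℓ : 1 ≤ ℓ)
    (hs : ∀ i ∈ Icc 1 ℓ, s ∈ T i) :
    ∃ x y f, ILPFeasible G ℓ T s x y f ∧
      ILPobj (fun u v => w s(u, v)) y ≤ ∑ i ∈ Icc 1 ℓ, ∑ e ∈ E i, w e := by
  obtain ⟨hE, hnest⟩ := h
  let H (i : ℕ) : SimpleGraph V := SimpleGraph.fromEdgeSet (E i)
  obtain ⟨p, rank, htree, hadj⟩ := exists_isLevelTree_reachLevel H ℓ s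
  have hlevel_mem {v : V} (hv : 0 < reachLevel H ℓ s v) : reachLevel H ℓ s v ∈ Icc 1 ℓ :=
    mem_Icc.2 ⟨hv, reachLevel_le⟩
  have hparent_mem : ∀ v ≠ s, 0 < reachLevel H ℓ s v → s(p v, v) ∈ E (reachLevel H ℓ s v) :=
    fun v hvs hv => ((SimpleGraph.fromEdgeSet_adj _).1 (hadj v hvs hv)).1
  have hterminal : ∀ i ∈ Icc 1 ℓ, ∀ v ∈ T i, i ≤ reachLevel H ℓ s v := fun i hi v hv =>
    le_reachLevel (mem_Icc.1 hi).2 ((hE i hi).2 s (.inl (hs i hi)) v (.inl hv))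
  have h1 : 1 ∈ Icc 1 ℓ := left_mem_Icc.2 hℓ
  obtain ⟨f, hf⟩ := htree.exists_ilpFeasible (G := G) (T := T)
    (fun v hvs hv => (hE _ (hlevel_mem hv)).1 (hparent_mem v hvs hv)) (fun _ => reachLevel_le)
    (hs 1 h1) (hterminal 1 h1)
    fun v _ => Finset.sup_le fun i hi => hterminal i (mem_filter.1 hi).1 v (mem_filter.1 hi).2
  refine ⟨_, _, f, hf, ILPobj_le_of_asymm (fun i hi e he => hw e ((hE i hi).1 he)) hf.le_level
    (fun u v => htree.parentArcLabel_asymm) fun i hi u v huv => ?_⟩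
  obtain ⟨rfl, hvs, hv⟩ := parentArcLabel_pos_iff.1 ((mem_Icc.1 hi).1.trans huv)
  exact hnest i hi _ (hlevel_mem hv) (huv.trans parentArcLabel_le) (hparent_mem v hvs hv)

/-! ### Equality of the minima -/

/-- The set of objective values of feasible ILP solutions, the counterpart of `MLSTCosts`. -/
def ILPValues {V : Type*} [Fintype V] [DecidableEq V] (G : SimpleGraph V) (c : V → V → ℝ) (ℓ : ℕ)
    (T : ℕ → Finset V) (s : V) : Set ℝ :=
  {v | ∃ (x y : V → V → ℕ) (f : V → V → ℝ), ILPFeasible G ℓ T s x y f ∧ v = ILPobj c y}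

theorem stmt_19_general {V : Type*} [Fintype V] [DecidableEq V] (G : SimpleGraph V)
    (w : Sym2 V → ℝ) (hw : ∀ e ∈ G.edgeSet, 0 ≤ w e) (ℓ : ℕ) (hℓ : 1 ≤ ℓ) (T : ℕ → Finset V)
    (hT : ∀ i ∈ Icc 1 ℓ, T i ⊆ T 1) (s : V) (hs : ∀ i ∈ Icc 1 ℓ, s ∈ T i) (OPT : ℝ) :
    IsLeast (MLSTCosts G w ℓ fun i => ↑(T i)) OPT ↔
      IsLeast (ILPValues G (fun u v => w s(u, v)) ℓ T s) OPT := by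
  have hILP : IsCoinitialFor (MLSTCosts G w ℓ fun i => ↑(T i))
      (ILPValues G (fun u v => w s(u, v)) ℓ T s) := by
    rintro _ ⟨E, hE, rfl⟩
    obtain ⟨x, y, f, hf, hle⟩ := hE.exists_ilpFeasible hw hℓ hs
    exact ⟨_, ⟨x, y, f, hf, rfl⟩, hle⟩
  have hMLST : IsCoinitialFor (ILPValues G (fun u v => w s(u, v)) ℓ T s)
      (MLSTCosts G w ℓ fun i => ↑(T i)) := by
    rintro _ ⟨x, y, f, hf, rfl⟩
    exact ⟨_, ⟨_, hf.mlstFeasible_reachedEdges hT, rfl⟩, hf.sum_reachedEdges_le_ILPobj hw⟩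
  exact ⟨isLeast_of_isCoinitialFor hILP hMLST, isLeast_of_isCoinitialFor hMLST hILP⟩

/-- The minimum of the objective `Σ_{uv∈E} c(uv)·(y_{uv} + y_{vu})` over all feasible
solutions of the flow-based ILP equals `OPT`, the minimum cost of a feasible MLST
solution of the instance. -/
theorem stmt_19 {V : Type} [Fintype V] [DecidableEq V] (G : SimpleGraph V)
    (hconn : G.Connected)
    (c : V → V → ℝ) (hcsymm : ∀ u v : V, c u v = c v u)
    (hcpos : ∀ u v : V, G.Adj u v → 0 < c u v)
    (ℓ : ℕ) (hℓ : 1 ≤ ℓ) (T : ℕ → Finset V)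
    (hTne : ∀ i ∈ Finset.Icc 1 ℓ, (T i).Nonempty)
    (hnest : ∀ i ∈ Finset.Icc 1 ℓ, ∀ j ∈ Finset.Icc 1 ℓ, i ≤ j → T j ⊆ T i)
    (s : V) (hs : s ∈ T ℓ)
    (OPT : ℝ)
    (hOPT : IsLeast (MLSTCosts G (Sym2.lift ⟨c, hcsymm⟩) ℓ (fun i => (↑(T i) : Set V))) OPT) :
    IsLeast
      {v : ℝ | ∃ (x y : V → V → ℕ) (f : V → V → ℝ),
        ILPFeasible G ℓ T s x y f ∧ v = ILPobj c y} OPT :=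
  (stmt_19_general G (Sym2.lift ⟨c, hcsymm⟩) (Sym2.ind fun u v huv => (hcpos u v huv).le) ℓ hℓ T
    (fun i hi => hnest 1 (Finset.left_mem_Icc.2 hℓ) i hi (Finset.mem_Icc.1 hi).1) s
    (fun i hi => hnest i hi ℓ (Finset.right_mem_Icc.2 hℓ) (Finset.mem_Icc.1 hi).2 hs) OPT).1 hOPT
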